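/- Let q be a prime power not divisible by 3 and let m > 1 be an integer. Then the sum of |𝓘(x^3, h, m, q)| over all polynomials h(x) ∈ F_q[x] of degree at most 2 with h(0) = 1 equals (q/(3m)) ∑_{d ∣ m, 3 ∤ d} μ(d) (q + ε^{m/d}) (q^{m/d} − ε^{m/d}), where ε = 1 if q ≡ 1 (mod 3) and ε = −1 if q ≡ −1 (mod 3), and μ is the Möbius function. -/

import Mathlib

open Polynomial

/-- The transform `f_R` of a nonzero polynomial `f` by the rational expression `R = g/h`. -/
noncomputable def ratTransform {K : Type*} [Field K] (g h f : K[X]) : K[X] :=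
  ∑ i ∈ Finset.range (f.natDegree + 1), C (f.coeff i) * g ^ i * h ^ (f.natDegree - i)

/-- `𝓘(g,h,n,q)`: the set of monic irreducible polynomials `f` of degree `n` over the field
such that `f_R` is irreducible. -/
noncomputable def IrredSet {K : Type*} [Field K] (g h : K[X]) (n : ℕ) : Set K[X] :=
  {f | f.Monic ∧ Irreducible f ∧ f.natDegree = n ∧ Irreducible (ratTransform g h f)}

/-- `I(n,q) = (1/n) ∑_{d ∣ n} μ(d) q^{n/d}`, used formally for any rational `q`. -/
noncomputable def Ifun (n : ℕ) (q : ℚ) : ℚ :=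
  (1 / (n : ℚ)) * ∑ d ∈ n.divisors, ((ArithmeticFunction.moebius d : ℤ) : ℚ) * q ^ (n / d)

/-- `I(n/m, q)` with the convention that it is `0` when `m` does not divide `n`
(i.e. when `n/m` is not a positive integer). -/
noncomputable def IfunD (n m : ℕ) (q : ℚ) : ℚ := if m ∣ n then Ifun (n / m) q else 0

/-- `n₃`: the largest power of `3` dividing `n`. -/
def nThree (n : ℕ) : ℕ := 3 ^ (n.factorization 3)

/-!
Fix an algebraic closure of `F` and write `deg` for the degree over `F`. A monic irreducible `f` of
degree `m` has irreducible transform under `x³ / h` exactly when the `3m` roots of the transform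
have degree `3m`, so `3m |𝓘(x³, h, m, q)|` counts the `y` with `deg y = 3m` and
`deg (y³ / h(y)) = m`. Inverting `y` turns `y³ / (1 + ay + by²)` into the cubic `y³ + ay² + by`, and
as `3 ≠ 0` a translation removes its quadratic term. For fixed `a` the linear coefficient of the
depressed cubic runs over `F` together with `b`.

Let `σ` be the Frobenius `y ↦ y^Q` with `Q = q^k`. The `y` of `σ`-period `3` at which `y³ + by` is
`σ`-fixed split by `d = deg (y³ + by)` into the sets sought, for those `d ∣ k` with `3 ∤ k / d`, so
their number determines the answer by Möbius inversion. Such `y ≠ 0` are described by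
`y + σy + σ²y = 0` and `y² + yσy + (σy)² = -b`. With a primitive cube root of unity `ω` the second
equation reads `uv = -b` for the Lagrange resolvents `u = σy - ωy` and `v = σy - ω²y`, and the first
one says `σu = ω²u` or `σu = ωv` according to whether `σ` fixes `ω` or squares it. The points are
thus counted by power equations in `u`: there are `Q - ε^k` of them when `b ≠ 0`, and
`(1 + ε^k)(Q - ε^k)` when `b = 0`.
-/

open ArithmeticFunction in
/-- The idea is that a completely multiplicative `χ` has Dirichlet inverse `n ↦ μ n * χ n`. -/
theorem eq_sum_moebius_mul_of_sum_mul_eq {R : Type*} [CommRing R] (χ : ℕ →*₀ R) {f g : ℕ → R}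
    (h : ∀ n, 0 < n → ∑ d ∈ n.divisors, χ (n / d) * f d = g n) {n : ℕ} (hn : 0 < n) :
    f n = ∑ d ∈ n.divisors, (moebius d : R) * χ d * g (n / d) := by
  let twist : ArithmeticFunction R := ⟨χ, map_zero χ⟩
  let A : ArithmeticFunction R := ⟨fun k ↦ if k = 0 then 0 else f k, if_pos rfl⟩
  have A_apply {k : ℕ} (hk : k ≠ 0) : A k = f k := if_neg hk
  have inverse : (moebius : ArithmeticFunction R).pmul twist * twist = 1 := by
    ext k
    have summand : ∀ x ∈ k.divisorsAntidiagonal,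
        (moebius : ArithmeticFunction R).pmul twist x.1 * twist x.2 = χ k * moebius x.1 := by
      intro x hx
      change moebius x.1 * χ x.1 * χ x.2 = _
      rw [← (Nat.mem_divisorsAntidiagonal.mp hx).1, map_mul]
      ring
    rw [mul_apply, Finset.sum_congr rfl summand, ← Finset.mul_sum,
      Nat.sum_divisorsAntidiagonal (fun i _ ↦ ((moebius i : ℤ) : R))]
    simp_rw [← intCoe_apply, ← coe_mul_zeta_apply, coe_moebius_mul_coe_zeta, one_apply]
    split_ifs with hk <;> simp [hk]
  have conv {k : ℕ} (hk : 0 < k) : (twist * A) k = g k := by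
    rw [← h k hk, mul_apply, Nat.sum_divisorsAntidiagonal' (fun i j ↦ twist i * A j)]
    refine Finset.sum_congr rfl fun d hd ↦ ?_
    rw [A_apply (Nat.pos_of_mem_divisors hd).ne']
    rfl
  calc f n = ((moebius : ArithmeticFunction R).pmul twist * (twist * A)) n := by
        rw [← mul_assoc, inverse, one_mul, A_apply hn.ne']
    _ = ∑ d ∈ n.divisors, (moebius d : R) * χ d * g (n / d) := by
        rw [mul_apply, Nat.sum_divisorsAntidiagonal
          (fun i j ↦ (moebius : ArithmeticFunction R).pmul twist i * (twist * A) j)]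
        refine Finset.sum_congr rfl fun d hd ↦ ?_
        rw [conv (Nat.div_pos (Nat.divisor_le hd) (Nat.pos_of_mem_divisors hd))]
        rfl

theorem eq_sum_moebius_mul_of_sum_filter_eq {R : Type*} [CommRing R] {p : ℕ} (hp : p.Prime)
    {f g : ℕ → R} (h : ∀ n, 0 < n → ∑ d ∈ n.divisors with ¬ p ∣ n / d, f d = g n)
    {n : ℕ} (hn : 0 < n) :
    f n = ∑ d ∈ n.divisors with ¬ p ∣ d, (ArithmeticFunction.moebius d : R) * g (n / d) := by
  have : Fact p.Prime := ⟨hp⟩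
  let χ : ℕ →*₀ R := (1 : MulChar (ZMod p) R).toMonoidWithZeroHom.comp
    (Nat.castRingHom (ZMod p)).toMonoidWithZeroHom
  have χ_apply (k : ℕ) : χ k = if p ∣ k then 0 else 1 := by
    change (1 : MulChar (ZMod p) R) (k : ZMod p) = _
    split_ifs with hk
    · rw [(ZMod.natCast_eq_zero_iff k p).mpr hk, MulChar.map_zero]
    · exact MulChar.one_apply
        ((ZMod.isUnit_iff_coprime k p).mpr (hp.coprime_iff_not_dvd.mpr hk).symm)
  rw [eq_sum_moebius_mul_of_sum_mul_eq (f := f) (g := g) χ ?_ hn, Finset.sum_filter]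
  · refine Finset.sum_congr rfl fun d _ ↦ ?_
    rw [χ_apply]
    split_ifs <;> simp
  · intro k hk
    rw [← h k hk, Finset.sum_filter]
    simp only [χ_apply, ite_mul, one_mul, zero_mul, ite_not]

theorem ncard_eq_sum_ncard_fiberwise {α β : Type*} {s : Set α} (hs : s.Finite) (f : α → β)
    {t : Finset β} (h : Set.MapsTo f s t) : s.ncard = ∑ b ∈ t, {a ∈ s | f a = b}.ncard := by
  classical
  rw [Set.ncard_eq_toFinset_card s hs, Finset.card_eq_sum_card_fiberwise (by simpa using h)]
  refine Finset.sum_congr rfl fun b _ ↦ ?_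
  rw [← Set.ncard_coe_finset]
  simp

section Degree

open IntermediateField

variable {F E : Type*} [Field F] [Field E] [Algebra F E]

theorem natDegree_minpoly_dvd_of_mem_adjoin {x y : E} (hy : IsIntegral F y) (hx : x ∈ F⟮y⟯) :
    (minpoly F x).natDegree ∣ (minpoly F y).natDegree := by
  have : FiniteDimensional F F⟮y⟯ := adjoin.finiteDimensional hy
  rw [← adjoin.finrank hy, ← minpoly_eq (⟨x, hx⟩ : F⟮y⟯)]
  exact minpoly.degree_dvd (Algebra.IsIntegral.isIntegral _)

theorem natDegree_minpoly_add_algebraMap (y : E) (a : F) :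
    (minpoly F (y + algebraMap F E a)).natDegree = (minpoly F y).natDegree := by
  rw [minpoly.add_algebraMap, natDegree_comp, natDegree_X_sub_C, mul_one]

theorem natDegree_minpoly_le_mul {P : F[X]} (hP : 0 < P.natDegree) {y : E}
    (hy : IsIntegral F (aeval y P)) :
    (minpoly F y).natDegree ≤ P.natDegree * (minpoly F (aeval y P)).natDegree := by
  rw [mul_comm, ← natDegree_comp]
  refine natDegree_le_of_dvd (minpoly.dvd F y ?_) fun h ↦ ?_
  · rw [aeval_comp, minpoly.aeval]
  · rcases comp_eq_zero_iff.mp h with h | ⟨-, h⟩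
    · exact minpoly.ne_zero hy h
    · rw [h, natDegree_C] at hP
      exact hP.false

variable [Algebra.IsAlgebraic F E]

theorem natDegree_minpoly_inv (y : E) : (minpoly F y⁻¹).natDegree = (minpoly F y).natDegree := by
  have dvd (z : E) : (minpoly F z⁻¹).natDegree ∣ (minpoly F z).natDegree :=
    natDegree_minpoly_dvd_of_mem_adjoin (Algebra.IsIntegral.isIntegral z)
      (inv_mem (mem_adjoin_simple_self F z))
  exact Nat.dvd_antisymm (dvd y) (by simpa using dvd y⁻¹)

theorem natDegree_minpoly_aeval_dvd (P : F[X]) (y : E) :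
    (minpoly F (aeval y P)).natDegree ∣ (minpoly F y).natDegree :=
  natDegree_minpoly_dvd_of_mem_adjoin (Algebra.IsIntegral.isIntegral y)
    (algebra_adjoin_le_adjoin F {y} (aeval_mem_adjoin_singleton F y))

theorem natDegree_minpoly_dvd_iff_pow_eq [Finite F] {y : E} {k : ℕ} :
    (minpoly F y).natDegree ∣ k ↔ y ^ Nat.card F ^ k = y := by
  have irr : Irreducible (minpoly F y) := minpoly.irreducible (Algebra.IsIntegral.isIntegral y)
  rw [irr.natDegree_dvd_iff_dvd_X_pow_card_pow_sub_X, minpoly.dvd_iff]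
  simp [sub_eq_zero]

variable (F E) in
theorem finite_setOf_natDegree_minpoly_dvd [Finite F] {n : ℕ} (hn : n ≠ 0) :
    {y : E | (minpoly F y).natDegree ∣ n}.Finite := by
  have ne_zero : (X ^ Nat.card F ^ n - X : E[X]) ≠ 0 :=
    FiniteField.X_pow_card_pow_sub_X_ne_zero E hn Finite.one_lt_card
  refine (rootSet_finite _ E).subset fun y hy ↦ (mem_rootSet_of_ne ne_zero).mpr ?_
  simp [natDegree_minpoly_dvd_iff_pow_eq.mp hy]

end Degree

section RatTransform

variable {F E : Type*} [Field F] [Field E] [Algebra F E] {g h f : F[X]}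

theorem degree_ratTransform_sub_pow_lt (hgh : h.natDegree < g.natDegree) (hf : f.Monic) :
    (ratTransform g h f - g ^ f.natDegree).degree < (g ^ f.natDegree).degree := by
  have hg : g ≠ 0 := ne_zero_of_natDegree_gt hgh
  rw [ratTransform, Finset.sum_range_succ, hf.coeff_natDegree, Nat.sub_self, pow_zero, mul_one,
    C_1, one_mul, add_sub_cancel_right]
  refine (degree_sum_le _ _).trans_lt ((Finset.sup_lt_iff ?_).mpr fun i hi ↦ degree_lt_degree ?_)
  · exact bot_lt_iff_ne_bot.mpr (degree_ne_bot.mpr (pow_ne_zero _ hg))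
  · have hi : i < f.natDegree := Finset.mem_range.mp hi
    calc (C (f.coeff i) * g ^ i * h ^ (f.natDegree - i)).natDegree
        ≤ i * g.natDegree + (f.natDegree - i) * h.natDegree := by
          refine natDegree_mul_le_of_le ?_ natDegree_pow_le
          exact (natDegree_C_mul_le _ _).trans natDegree_pow_le
      _ < i * g.natDegree + (f.natDegree - i) * g.natDegree := by
          have : 0 < f.natDegree - i := Nat.sub_pos_of_lt hi
          gcongr
      _ = (g ^ f.natDegree).natDegree := by
          rw [natDegree_pow, ← add_mul, Nat.add_sub_cancel' hi.le]

theorem monic_ratTransform (hg : g.Monic) (hgh : h.natDegree < g.natDegree) (hf : f.Monic) :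
    (ratTransform g h f).Monic := by
  simpa using (hg.pow f.natDegree).add_of_right (degree_ratTransform_sub_pow_lt hgh hf)

theorem natDegree_ratTransform (hgh : h.natDegree < g.natDegree) (hf : f.Monic) :
    (ratTransform g h f).natDegree = g.natDegree * f.natDegree := by
  have := natDegree_add_eq_right_of_degree_lt (degree_ratTransform_sub_pow_lt hgh hf)
  rwa [sub_add_cancel, natDegree_pow, mul_comm] at this

theorem aeval_ratTransform (f : F[X]) {y : E} (hy : aeval y h ≠ 0) :
    aeval y (ratTransform g h f) = aeval y h ^ f.natDegree * aeval (aeval y g / aeval y h) f := by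
  rw [ratTransform, map_sum, aeval_eq_sum_range (p := f), Finset.mul_sum]
  refine Finset.sum_congr rfl fun i hi ↦ ?_
  have hi : i ≤ f.natDegree := Finset.mem_range_succ_iff.mp hi
  rw [Algebra.smul_def, ← Nat.sub_add_cancel hi, pow_add, div_pow]
  simp only [map_mul, map_pow, aeval_C, Nat.sub_add_cancel hi]
  field_simp

theorem aeval_ne_zero_of_natDegree_lt {y : E} (h0 : h ≠ 0)
    (hlt : h.natDegree < (minpoly F y).natDegree) : aeval y h ≠ 0 := fun hz ↦
  hlt.not_ge (natDegree_le_of_dvd (minpoly.dvd F y hz) h0)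

theorem minpoly_eq_ratTransform_iff (hg : g.Monic) (h0 : h ≠ 0) (hgh : h.natDegree < g.natDegree)
    (hf : f.Monic) (hirr : Irreducible f) {y : E} (hy : IsIntegral F y) :
    minpoly F y = ratTransform g h f ↔ (minpoly F y).natDegree = g.natDegree * f.natDegree ∧
      minpoly F (aeval y g / aeval y h) = f := by
  have aeval_ne (hdeg : (minpoly F y).natDegree = g.natDegree * f.natDegree) : aeval y h ≠ 0 :=
    aeval_ne_zero_of_natDegree_lt h0
      (hgh.trans_le (hdeg ▸ Nat.le_mul_of_pos_right _ hirr.natDegree_pos))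
  constructor
  · intro heq
    have hdeg : (minpoly F y).natDegree = g.natDegree * f.natDegree := by
      rw [heq, natDegree_ratTransform hgh hf]
    have root : aeval y (ratTransform g h f) = 0 := by rw [← heq, minpoly.aeval]
    rw [aeval_ratTransform f (aeval_ne hdeg)] at root
    refine ⟨hdeg, (minpoly.eq_of_irreducible_of_monic hirr ?_ hf).symm⟩
    exact (mul_eq_zero.mp root).resolve_left (pow_ne_zero _ (aeval_ne hdeg))
  · rintro ⟨hdeg, heq⟩
    refine (eq_of_monic_of_dvd_of_natDegree_le (minpoly.monic hy) (monic_ratTransform hg hgh hf)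
      (minpoly.dvd F y ?_) ?_).symm
    · rw [aeval_ratTransform f (aeval_ne hdeg), ← heq, minpoly.aeval, mul_zero]
    · rw [natDegree_ratTransform hgh hf, hdeg]

theorem finite_irredSet [Finite F] (g h : F[X]) (n : ℕ) : (IrredSet g h n).Finite := by
  have : Finite (degreeLT F (n + 1)) := Finite.of_equiv _ (degreeLTEquiv F (n + 1)).symm.toEquiv
  refine (Set.toFinite (degreeLT F (n + 1) : Set F[X])).subset ?_
  rintro f ⟨-, -, rfl, -⟩
  exact mem_degreeLT.mpr (degree_le_natDegree.trans_lt (by exact_mod_cast Nat.lt_succ_self _))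

end RatTransform

section InertPoints

/-- The points of degree `d * k` over `F` which the map `R` sends to points of degree `k`. For a
rational function `R` of degree `d` these are the points lying above an inert place of degree
`k`. -/
def inertPoints (F : Type*) {E : Type*} [Field F] [Field E] [Algebra F E] (R : E → E) (d k : ℕ) :
    Set E :=
  {y | (minpoly F y).natDegree = d * k ∧ (minpoly F (R y)).natDegree = k}

variable {F E : Type*} [Field F] [Field E] [Algebra F E]

theorem ncard_inertPoints_eq_of_equiv {R S : E → E} (e : E ≃ E)
    (he : ∀ y, (minpoly F (e y)).natDegree = (minpoly F y).natDegree)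
    (hRS : ∀ y, (minpoly F (S (e y))).natDegree = (minpoly F (R y)).natDegree) (d k : ℕ) :
    (inertPoints F R d k).ncard = (inertPoints F S d k).ncard := by
  rw [← Set.ncard_preimage_of_injective_subset_range (s := inertPoints F S d k) e.injective
    (by simp)]
  simp only [inertPoints, Set.preimage_ofPred_eq, he, hRS]

theorem ncard_inertPoints_ratio [Finite F] [Algebra.IsAlgebraic F E] [IsAlgClosed E] {g h : F[X]}
    (hg : g.Monic) (h0 : h ≠ 0) (hgh : h.natDegree < g.natDegree) {k : ℕ} (hk : 0 < k) :
    (inertPoints F (fun y : E ↦ aeval y g / aeval y h) g.natDegree k).ncard =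
      g.natDegree * k * (IrredSet g h k).ncard := by
  have integral (y : E) : IsIntegral F y := Algebra.IsIntegral.isIntegral y
  set s : Set E := inertPoints F (fun y : E ↦ aeval y g / aeval y h) g.natDegree k
  have finite : s.Finite := (finite_setOf_natDegree_minpoly_dvd F E
    (mul_pos (pos_of_gt hgh) hk).ne').subset fun y hy ↦ dvd_of_eq hy.1
  have maps : Set.MapsTo (fun y : E ↦ minpoly F (aeval y g / aeval y h)) s
      ((finite_irredSet g h k).toFinset : Set F[X]) := by
    rintro y ⟨hy, hRy⟩
    have monic := minpoly.monic (integral (aeval y g / aeval y h))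
    have irr := minpoly.irreducible (integral (aeval y g / aeval y h))
    rw [Set.Finite.coe_toFinset]
    refine ⟨monic, irr, hRy, ?_⟩
    have heq := (minpoly_eq_ratTransform_iff hg h0 hgh monic irr (integral y)).mpr
      ⟨by rw [hy, hRy], rfl⟩
    exact heq ▸ minpoly.irreducible (integral y)
  have fiber : ∀ f ∈ IrredSet g h k,
      {y ∈ s | minpoly F (aeval y g / aeval y h) = f}.ncard = g.natDegree * k := by
    rintro f ⟨monic, irr, rfl, irr_transform⟩
    have eq_rootSet : {y ∈ s | minpoly F (aeval y g / aeval y h) = f} =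
        (ratTransform g h f).rootSet E := by
      ext y
      rw [mem_rootSet_of_ne irr_transform.ne_zero,
        ← minpoly.eq_iff_aeval_eq_zero irr_transform (monic_ratTransform hg hgh monic), eq_comm,
        minpoly_eq_ratTransform_iff hg h0 hgh monic irr (integral y)]
      exact ⟨fun hy ↦ ⟨hy.1.1, hy.2⟩, fun hy ↦ ⟨⟨hy.1, by rw [hy.2]⟩, hy.2⟩⟩
    rw [eq_rootSet, ← natDegree_ratTransform hgh monic, ← Nat.card_coe_set_eq,
      Nat.card_eq_fintype_card]
    exact card_rootSet_eq_natDegree (PerfectField.separable_of_irreducible irr_transform)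
      (IsAlgClosed.splits _)
  rw [ncard_eq_sum_ncard_fiberwise finite _ maps,
    Finset.sum_congr rfl fun f hf ↦ fiber f (by simpa using hf), Finset.sum_const, smul_eq_mul,
    mul_comm, Set.ncard_eq_toFinset_card _ (finite_irredSet g h k)]

theorem ncard_inertPoints_cube_ratio [Algebra.IsAlgebraic F E] (a b : F) (d k : ℕ) :
    (inertPoints F (fun y : E ↦
      aeval y (X ^ 3 : F[X]) / aeval y (C b * X ^ 2 + C a * X + 1)) d k).ncard =
      (inertPoints F (fun y : E ↦ aeval y (X ^ 3 + C a * X ^ 2 + C b * X)) d k).ncard := by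
  refine ncard_inertPoints_eq_of_equiv (Equiv.inv E) natDegree_minpoly_inv (fun y ↦ ?_) d k
  rw [Equiv.inv_apply, ← natDegree_minpoly_inv]
  congr 2
  rcases eq_or_ne y 0 with rfl | hy
  · simp
  · simp only [map_add, map_mul, map_pow, map_one, aeval_X, aeval_C]
    field_simp
    ring

theorem ncard_inertPoints_depressed_cubic (h3 : (3 : F) ≠ 0) (a b : F) (d k : ℕ) :
    (inertPoints F (fun y : E ↦ aeval y (X ^ 3 + C a * X ^ 2 + C b * X)) d k).ncard =
      (inertPoints F (fun y : E ↦ aeval y (X ^ 3 + C (b - a ^ 2 / 3) * X)) d k).ncard := by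
  refine ncard_inertPoints_eq_of_equiv (Equiv.addRight (algebraMap F E (a / 3)))
    (natDegree_minpoly_add_algebraMap · _) (fun y ↦ ?_) d k
  rw [← natDegree_minpoly_add_algebraMap (aeval y (X ^ 3 + C a * X ^ 2 + C b * X))
    (b * (a / 3) - 2 * (a / 3) ^ 3)]
  congr 2
  have h3E : (3 : E) ≠ 0 := by
    simpa only [map_ofNat] using (map_ne_zero (algebraMap F E)).mpr h3
  simp only [Equiv.coe_addRight, map_add, map_sub, map_mul, map_div₀, map_pow, aeval_X, aeval_C,
    map_ofNat]
  field_simp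
  ring

theorem dvd_mul_and_not_dvd_iff {p d e k : ℕ} (hp : p.Prime) (hde : d ∣ e) (he : 0 < e)
    (hle : e ≤ p * d) (hdk : d ∣ k) : e ∣ p * k ∧ ¬ e ∣ k ↔ e = p * d ∧ ¬ p ∣ k / d := by
  obtain ⟨c, rfl⟩ := hde
  obtain ⟨n, rfl⟩ := hdk
  have hd : 0 < d := Nat.pos_of_mul_pos_right he
  rw [mul_left_comm, Nat.mul_dvd_mul_iff_left hd, Nat.mul_dvd_mul_iff_left hd,
    Nat.mul_div_cancel_left _ hd, mul_comm p d, Nat.mul_right_inj hd.ne']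
  rw [mul_comm d c] at hle
  have hcp : c ≤ p := Nat.le_of_mul_le_mul_right hle hd
  constructor
  · rintro ⟨hcpn, hcn⟩
    have not_lt (hlt : c < p) : False :=
      have coprime := Nat.coprime_of_lt_prime (Nat.pos_of_mul_pos_left he).ne' hlt hp
      hcn (coprime.symm.dvd_of_dvd_mul_left hcpn)
    obtain rfl : c = p := hcp.eq_of_not_lt not_lt
    exact ⟨rfl, hcn⟩
  · rintro ⟨rfl, hn⟩
    exact ⟨dvd_mul_right _ _, hn⟩

theorem ncard_eq_sum_ncard_inertPoints [Finite F] [Algebra.IsAlgebraic F E] {P : F[X]}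
    (hP : P.natDegree.Prime) {k : ℕ} (hk : 0 < k) :
    {y : E | ((minpoly F y).natDegree ∣ P.natDegree * k ∧ ¬ (minpoly F y).natDegree ∣ k) ∧
      (minpoly F (aeval y P)).natDegree ∣ k}.ncard =
      ∑ d ∈ k.divisors with ¬ P.natDegree ∣ k / d,
        (inertPoints F (fun y : E ↦ aeval y P) P.natDegree d).ncard := by
  set s : Set E := {y | ((minpoly F y).natDegree ∣ P.natDegree * k ∧
    ¬ (minpoly F y).natDegree ∣ k) ∧ (minpoly F (aeval y P)).natDegree ∣ k}
  have finite : s.Finite := (finite_setOf_natDegree_minpoly_dvd F E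
    (mul_pos hP.pos hk).ne').subset fun y hy ↦ hy.1.1
  have maps : Set.MapsTo (fun y : E ↦ (minpoly F (aeval y P)).natDegree) s k.divisors :=
    fun y hy ↦ Finset.mem_coe.mpr (Nat.mem_divisors.mpr ⟨hy.2, hk.ne'⟩)
  have key (y : E) (hy : (minpoly F (aeval y P)).natDegree ∣ k) :=
    dvd_mul_and_not_dvd_iff hP (natDegree_minpoly_aeval_dvd P y)
      (minpoly.natDegree_pos (Algebra.IsIntegral.isIntegral y))
      (natDegree_minpoly_le_mul hP.pos (Algebra.IsIntegral.isIntegral _)) hy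
  rw [ncard_eq_sum_ncard_fiberwise finite _ maps, Finset.sum_filter]
  refine Finset.sum_congr rfl fun d hd ↦ ?_
  have hdk : d ∣ k := Nat.dvd_of_mem_divisors hd
  split_ifs with hpd
  · refine (Set.ncard_eq_zero (finite.subset fun y hy ↦ hy.1)).mpr ?_
    refine Set.eq_empty_of_forall_notMem ?_
    rintro y ⟨⟨hdeg, hy⟩, rfl⟩
    exact ((key y hy).mp hdeg).2 hpd
  · congr 1
    ext y
    constructor
    · rintro ⟨⟨hdeg, hy⟩, rfl⟩
      exact ⟨((key y hy).mp hdeg).1, rfl⟩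
    · rintro ⟨hdeg, rfl⟩
      exact ⟨⟨(key y hdk).mpr ⟨hdeg, hpd⟩, hdk⟩, rfl⟩

end InertPoints

section CubicPoints

variable {K : Type*} [Field K]

/-- The points of period exactly `3` under the endomorphism `σ` at which `y ^ 3 + b * y` takes a
`σ`-fixed value. For `σ` the Frobenius of a finite field these are the elements of its cubic
extension that are roots of an irreducible cubic without quadratic term and with linear
coefficient `b`. -/
def cubicPoints (σ : K →+* K) (b : K) : Set K :=
  {y | (σ (σ (σ y)) = y ∧ σ y ≠ y) ∧ σ (y ^ 3 + b * y) = y ^ 3 + b * y}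

variable {σ : K →+* K} {b ω : K}

theorem mem_cubicPoints_iff (h3 : (3 : K) ≠ 0) (hb : σ b = b) {y : K} :
    y ∈ cubicPoints σ b ↔
      y ≠ 0 ∧ y + σ y + σ (σ y) = 0 ∧ y ^ 2 + y * σ y + σ y ^ 2 = -b := by
  have map_cubic : σ (y ^ 3 + b * y) = σ y ^ 3 + b * σ y := by
    simp only [map_add, map_mul, map_pow, hb]
  constructor
  · rintro ⟨⟨hy3, hy1⟩, hfix⟩
    have hy0 : y ≠ 0 := fun h ↦ hy1 (by rw [h, map_zero])
    have quadratic : y ^ 2 + y * σ y + σ y ^ 2 = -b := by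
      rw [map_cubic] at hfix
      refine mul_left_cancel₀ (sub_ne_zero.mpr hy1) ?_
      linear_combination hfix
    have hy2 : σ (σ y) ≠ y := fun h ↦ hy1 (by rwa [h] at hy3)
    have conj := congrArg σ quadratic
    simp only [map_add, map_mul, map_pow, map_neg, hb] at conj
    refine ⟨hy0, mul_left_cancel₀ (sub_ne_zero.mpr hy2) ?_, quadratic⟩
    linear_combination conj - quadratic
  · rintro ⟨hy0, trace, quadratic⟩
    have conj := congrArg σ trace
    simp only [map_add, map_zero] at conj
    refine ⟨⟨by linear_combination conj - trace, fun h ↦ ?_⟩, ?_⟩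
    · rw [h, h] at trace
      exact mul_ne_zero h3 hy0 (by linear_combination trace)
    · rw [map_cubic]
      linear_combination (σ y - y) * quadratic

theorem sub_sq_ne_zero_of_sq_add_add_one (h3 : (3 : K) ≠ 0) (hω : ω ^ 2 + ω + 1 = 0) :
    ω - ω ^ 2 ≠ 0 := fun h ↦
  h3 (by linear_combination (ω ^ 2 - 3 * ω + 3) * hω - (ω - ω ^ 2) * h)

theorem resolvent_mul_resolvent (hω : ω ^ 2 + ω + 1 = 0) (y z : K) :
    (z - ω * y) * (z - ω ^ 2 * y) = y ^ 2 + y * z + z ^ 2 := by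
  linear_combination ((ω - 1) * y ^ 2 - y * z) * hω

theorem resolvent_sub_resolvent_div (hδ : ω - ω ^ 2 ≠ 0) (u v : K) :
    (ω * v - ω ^ 2 * u) / (ω - ω ^ 2) - ω * ((v - u) / (ω - ω ^ 2)) = u ∧
      (ω * v - ω ^ 2 * u) / (ω - ω ^ 2) - ω ^ 2 * ((v - u) / (ω - ω ^ 2)) = v := by
  rw [← mul_div_assoc, ← mul_div_assoc, ← sub_div, ← sub_div, div_eq_iff hδ, div_eq_iff hδ]
  constructor <;> ring

theorem mem_cubicPoints_iff_of_fixed (h3 : (3 : K) ≠ 0) (hω : ω ^ 2 + ω + 1 = 0) (hσω : σ ω = ω)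
    (hb : σ b = b) {y : K} :
    y ∈ cubicPoints σ b ↔ y ≠ 0 ∧ σ (σ y - ω * y) = ω ^ 2 * (σ y - ω * y) ∧
      (σ y - ω * y) * (σ y - ω ^ 2 * y) = -b := by
  rw [mem_cubicPoints_iff h3 hb, resolvent_mul_resolvent hω, map_sub, map_mul, hσω]
  have trace : y + σ y + σ (σ y) =
      σ (σ y) - ω * σ y - ω ^ 2 * (σ y - ω * y) := by
    linear_combination (σ y + (1 - ω) * y) * hω
  rw [trace, sub_eq_zero]

theorem mem_cubicPoints_iff_of_swap (h3 : (3 : K) ≠ 0) (hω : ω ^ 2 + ω + 1 = 0)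
    (hσω : σ ω = ω ^ 2) (hb : σ b = b) {y : K} :
    y ∈ cubicPoints σ b ↔ y ≠ 0 ∧ σ (σ y - ω * y) = ω * (σ y - ω ^ 2 * y) ∧
      (σ y - ω * y) * (σ y - ω ^ 2 * y) = -b := by
  rw [mem_cubicPoints_iff h3 hb, resolvent_mul_resolvent hω, map_sub, map_mul, hσω]
  have trace : y + σ y + σ (σ y) =
      σ (σ y) - ω ^ 2 * σ y - ω * (σ y - ω ^ 2 * y) := by
    linear_combination (σ y + (1 - ω) * y) * hω
  rw [trace, sub_eq_zero]

theorem bijOn_cubicPoints_of_fixed (h3 : (3 : K) ≠ 0) (hω : ω ^ 2 + ω + 1 = 0) (hσω : σ ω = ω)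
    (hb : σ b = b) (hb0 : b ≠ 0) :
    Set.BijOn (fun y ↦ σ y - ω * y) (cubicPoints σ b) {u | u ≠ 0 ∧ σ u = ω ^ 2 * u} := by
  have hδ := sub_sq_ne_zero_of_sq_add_add_one h3 hω
  have mem_iff {y : K} := mem_cubicPoints_iff_of_fixed h3 hω hσω hb (y := y)
  have ne_zero {y : K} (hy : y ∈ cubicPoints σ b) : σ y - ω * y ≠ 0 :=
    left_ne_zero_of_mul ((mem_iff.mp hy).2.2.trans_ne (neg_ne_zero.mpr hb0))
  let inverse (u : K) : K := (-b / u - u) / (ω - ω ^ 2)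
  have resolvents_inverse {u : K} (hu : u ≠ 0) (hσu : σ u = ω ^ 2 * u) :
      σ (inverse u) - ω * inverse u = u ∧ σ (inverse u) - ω ^ 2 * inverse u = -b / u := by
    have map_inverse : σ (inverse u) = (ω * (-b / u) - ω ^ 2 * u) / (ω - ω ^ 2) := by
      have map_div : -b / (ω ^ 2 * u) = ω * (-b / u) := by
        have hω0 : ω ≠ 0 := by
          rintro rfl
          simp at hω
        field_simp
        linear_combination (ω - 1) * hω
      simp only [inverse, map_div₀, map_sub, map_neg, map_pow, hb, hσω, hσu, map_div]
    rw [map_inverse]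
    exact resolvent_sub_resolvent_div hδ u (-b / u)
  refine Set.InvOn.bijOn (f' := inverse)
    ⟨fun y hy ↦ ?_, fun u hu ↦ (resolvents_inverse hu.1 hu.2).1⟩
    (fun y hy ↦ ⟨ne_zero hy, (mem_iff.mp hy).2.1⟩) fun u ⟨hu0, hσu⟩ ↦ mem_iff.mpr ?_
  · have hv : -b / (σ y - ω * y) = σ y - ω ^ 2 * y := by
      rw [div_eq_iff (ne_zero hy), mul_comm, (mem_iff.mp hy).2.2]
    rw [div_eq_iff hδ, hv]
    ring
  · obtain ⟨hu, hv⟩ := resolvents_inverse hu0 hσu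
    rw [hu, hv, mul_div_cancel₀ _ hu0]
    refine ⟨fun h ↦ hu0 ?_, hσu, rfl⟩
    rw [← hu, h, map_zero, mul_zero, sub_zero]

theorem cubicPoints_zero_of_fixed (h3 : (3 : K) ≠ 0) (hω : ω ^ 2 + ω + 1 = 0) (hσω : σ ω = ω) :
    cubicPoints σ 0 = {y | y ≠ 0 ∧ σ y = ω * y} ∪ {y | y ≠ 0 ∧ σ y = ω ^ 2 * y} := by
  ext y
  rw [mem_cubicPoints_iff_of_fixed h3 hω hσω (map_zero σ), neg_zero, mul_eq_zero, sub_eq_zero,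
    sub_eq_zero]
  constructor
  · rintro ⟨hy, -, h | h⟩
    · exact .inl ⟨hy, h⟩
    · exact .inr ⟨hy, h⟩
  · rintro (⟨hy, h⟩ | ⟨hy, h⟩)
    · exact ⟨hy, by simp [h], .inl h⟩
    · refine ⟨hy, ?_, .inr h⟩
      simp only [h, hσω, map_sub, map_mul, map_pow]
      ring

theorem bijOn_cubicPoints_of_swap (h3 : (3 : K) ≠ 0) (hω : ω ^ 2 + ω + 1 = 0)
    (hσω : σ ω = ω ^ 2) (hb : σ b = b) :
    Set.BijOn (fun y ↦ σ y - ω * y) (cubicPoints σ b) {u | u ≠ 0 ∧ σ u * u = -b * ω} := by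
  have hδ := sub_sq_ne_zero_of_sq_add_add_one h3 hω
  have hω3 : ω ^ 3 = 1 := by linear_combination (ω - 1) * hω
  have mem_iff {y : K} := mem_cubicPoints_iff_of_swap h3 hω hσω hb (y := y)
  let inverse (u : K) : K := (ω ^ 2 * σ u - u) / (ω - ω ^ 2)
  have resolvents_inverse {u : K} (hu : u ≠ 0) (hσu : σ u * u = -b * ω) :
      σ (inverse u) - ω * inverse u = u ∧ σ (inverse u) - ω ^ 2 * inverse u = ω ^ 2 * σ u := by
    have map_map : σ (σ u) = ω * u := by
      have conj := congrArg σ hσu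
      simp only [map_mul, map_neg, hb, hσω] at conj
      refine mul_right_cancel₀ ((map_ne_zero σ).mpr hu) ?_
      linear_combination conj - ω * hσu
    have map_inverse : σ (inverse u) = (ω * (ω ^ 2 * σ u) - ω ^ 2 * u) / (ω - ω ^ 2) := by
      have map_δ : σ (ω - ω ^ 2) = -(ω - ω ^ 2) := by
        simp only [map_sub, map_pow, hσω]
        linear_combination -ω * hω3
      rw [map_div₀, map_δ, map_sub, map_mul, map_pow, hσω, map_map, div_neg, ← neg_div]
      congr 1
      linear_combination (-ω ^ 2 * u - σ u) * hω3
    rw [map_inverse]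
    exact resolvent_sub_resolvent_div hδ u (ω ^ 2 * σ u)
  refine Set.InvOn.bijOn (f' := inverse)
    ⟨fun y hy ↦ ?_, fun u hu ↦ (resolvents_inverse hu.1 hu.2).1⟩
    (fun y hy ↦ ⟨fun h ↦ ?_, ?_⟩) fun u ⟨hu0, hσu⟩ ↦ mem_iff.mpr ?_
  · rw [div_eq_iff hδ, (mem_iff.mp hy).2.1]
    linear_combination (σ y - ω ^ 2 * y) * hω3
  · obtain ⟨hy0, hσu, -⟩ := mem_iff.mp hy
    refine mul_ne_zero hδ hy0 ?_
    rw [h, map_zero] at hσu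
    linear_combination -ω ^ 2 * hσu - h - (σ y - ω ^ 2 * y) * hω3
  · obtain ⟨-, hσu, huv⟩ := mem_iff.mp hy
    rw [hσu]
    linear_combination ω * huv
  · obtain ⟨hu, hv⟩ := resolvents_inverse hu0 hσu
    rw [hu, hv]
    refine ⟨fun h ↦ hu0 ?_, ?_, ?_⟩
    · rw [← hu, h, map_zero, mul_zero, sub_zero]
    · linear_combination -σ u * hω3
    · linear_combination ω ^ 2 * hσu - b * hω3

theorem ncard_pow_eq [IsAlgClosed K] {n : ℕ} (hn : (n : K) ≠ 0) {c : K} (hc : c ≠ 0) :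
    {u : K | u ^ n = c}.ncard = n := by
  have n_pos : 0 < n := Nat.pos_of_ne_zero fun h ↦ hn (by rw [h, Nat.cast_zero])
  have eq_rootSet : {u : K | u ^ n = c} = (X ^ n - C c : K[X]).rootSet K := by
    ext u
    simp [mem_rootSet, X_pow_sub_C_ne_zero n_pos, sub_eq_zero]
  rw [eq_rootSet, ← Nat.card_coe_set_eq, Nat.card_eq_fintype_card, card_rootSet_eq_natDegree
    (separable_X_pow_sub_C c hn hc) (IsAlgClosed.splits _), natDegree_X_pow_sub_C]

section Power

variable {Q : ℕ}

theorem three_ne_zero_of_not_three_dvd (hQ : (Q : K) = 0) (hQ3 : ¬ 3 ∣ Q) : (3 : K) ≠ 0 := by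
  have coprime : IsCoprime ((3 : ℕ) : K) Q :=
    (Nat.prime_three.coprime_iff_not_dvd.mpr hQ3).cast
  rw [hQ, isCoprime_zero_right] at coprime
  exact coprime.ne_zero

variable [IsAlgClosed K] (hσ : ∀ x, σ x = x ^ Q) (hQ : (Q : K) = 0)

include hσ

theorem exists_sq_add_add_one_and_map_eq :
    ∃ ω : K, ω ^ 2 + ω + 1 = 0 ∧ σ ω = ω ^ (Q % 3) := by
  have degree_eq : (X ^ 2 + X + 1 : K[X]).degree = 2 := by compute_degree!
  obtain ⟨ω, root⟩ := IsAlgClosed.exists_root (X ^ 2 + X + 1 : K[X])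
    (degree_eq.trans_ne two_ne_zero)
  have hω : ω ^ 2 + ω + 1 = 0 := by simpa using root
  have hω3 : ω ^ 3 = 1 := by linear_combination (ω - 1) * hω
  exact ⟨ω, hω, by rw [hσ, pow_eq_pow_mod Q hω3]⟩

include hQ

theorem ncard_ne_zero_and_map_eq_mul {c : K} (hc : c ≠ 0) :
    ({u | u ≠ 0 ∧ σ u = c * u}.ncard : ℚ) = Q - 1 := by
  obtain ⟨n, rfl⟩ : ∃ n, Q = n + 1 :=
    Nat.exists_eq_succ_of_ne_zero fun h ↦ by simpa [h] using (hσ 0).symm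
  have hn : (n : K) ≠ 0 := fun h ↦ by simp [h] at hQ
  have eq_pow : {u | u ≠ 0 ∧ σ u = c * u} = {u | u ^ n = c} := by
    ext u
    rcases eq_or_ne u 0 with rfl | hu
    · have hn0 : n ≠ 0 := fun h ↦ hn (by rw [h, Nat.cast_zero])
      simp [hn0, hc.symm]
    · simp [hu, hσ, pow_succ]
  rw [eq_pow, ncard_pow_eq hn hc, Nat.cast_succ, add_sub_cancel_right]

theorem ncard_cubicPoints {e : ℚ} (he : (Q % 3 = 1 ∧ e = 1) ∨ (Q % 3 = 2 ∧ e = -1))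
    (hb : σ b = b) (hb0 : b ≠ 0) : ((cubicPoints σ b).ncard : ℚ) = Q - e := by
  have h3 : (3 : K) ≠ 0 := three_ne_zero_of_not_three_dvd hQ (by omega)
  obtain ⟨ω, hω, hσω⟩ := exists_sq_add_add_one_and_map_eq hσ
  have hω0 : ω ≠ 0 := fun h ↦ by simp [h] at hω
  rcases he with ⟨hQ3, rfl⟩ | ⟨hQ3, rfl⟩
  · rw [hQ3, pow_one] at hσω
    rw [(bijOn_cubicPoints_of_fixed h3 hω hσω hb hb0).ncard_eq]
    exact ncard_ne_zero_and_map_eq_mul hσ hQ (pow_ne_zero 2 hω0)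
  · rw [hQ3] at hσω
    have hc : -b * ω ≠ 0 := mul_ne_zero (neg_ne_zero.mpr hb0) hω0
    have eq_pow : {u | u ≠ 0 ∧ σ u * u = -b * ω} = {u | u ^ (Q + 1) = -b * ω} := by
      ext u
      rw [Set.mem_ofPred_eq, Set.mem_ofPred_eq, hσ, ← pow_succ]
      exact and_iff_right_of_imp fun hu hu0 ↦ hc (by rw [← hu, hu0, zero_pow Q.succ_ne_zero])
    rw [(bijOn_cubicPoints_of_swap h3 hω hσω hb).ncard_eq, eq_pow,
      ncard_pow_eq (by simp [hQ]) hc, Nat.cast_succ, sub_neg_eq_add]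

theorem ncard_cubicPoints_zero {e : ℚ} (he : (Q % 3 = 1 ∧ e = 1) ∨ (Q % 3 = 2 ∧ e = -1)) :
    ((cubicPoints σ 0).ncard : ℚ) = (1 + e) * (Q - e) := by
  have h3 : (3 : K) ≠ 0 := three_ne_zero_of_not_three_dvd hQ (by omega)
  obtain ⟨ω, hω, hσω⟩ := exists_sq_add_add_one_and_map_eq hσ
  have hω0 : ω ≠ 0 := fun h ↦ by simp [h] at hω
  rcases he with ⟨hQ3, rfl⟩ | ⟨hQ3, rfl⟩
  · rw [hQ3, pow_one] at hσω
    have disjoint : Disjoint {y | y ≠ 0 ∧ σ y = ω * y} {y | y ≠ 0 ∧ σ y = ω ^ 2 * y} := by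
      refine Set.disjoint_left.mpr fun y ⟨hy, h⟩ ⟨_, h'⟩ ↦ ?_
      refine mul_ne_zero (sub_sq_ne_zero_of_sq_add_add_one h3 hω) hy ?_
      linear_combination h' - h
    have ncard_eq {c : K} (hc : c ≠ 0) := ncard_ne_zero_and_map_eq_mul hσ hQ hc
    have hQ1 : (Q : ℚ) - 1 ≠ 0 := sub_ne_zero.mpr fun h ↦ by
      simp [Nat.cast_eq_one.mp h] at hQ
    have finite {c : K} (hc : c ≠ 0) : {y | y ≠ 0 ∧ σ y = c * y}.Finite :=
      Set.finite_of_ncard_ne_zero (Nat.cast_ne_zero.mp ((ncard_eq hc).trans_ne hQ1))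
    rw [cubicPoints_zero_of_fixed h3 hω hσω, Set.ncard_union_eq disjoint (finite hω0)
      (finite (pow_ne_zero 2 hω0)), Nat.cast_add, ncard_eq hω0, ncard_eq (pow_ne_zero 2 hω0)]
    ring
  · rw [hQ3] at hσω
    rw [(bijOn_cubicPoints_of_swap h3 hω hσω (map_zero σ)).ncard_eq]
    simp

end Power

end CubicPoints

theorem sign_pow_of_mod_three {q : ℕ} {ε : ℚ} (hε : (q % 3 = 1 ∧ ε = 1) ∨ (q % 3 = 2 ∧ ε = -1))
    (k : ℕ) : (q ^ k % 3 = 1 ∧ ε ^ k = 1) ∨ (q ^ k % 3 = 2 ∧ ε ^ k = -1) := by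
  rcases hε with ⟨hq, rfl⟩ | ⟨hq, rfl⟩
  · exact .inl ⟨by simp [Nat.pow_mod, hq], one_pow k⟩
  · induction k with
    | zero => simp
    | succ k ih =>
      rcases ih with ⟨hk, hεk⟩ | ⟨hk, hεk⟩ <;> simp [pow_succ, Nat.mul_mod, hq, hk, hεk]

section FiniteField

variable {F E : Type*} [Field F] [Field E] [Algebra F E]

theorem cubicPoints_eq_setOf_natDegree_minpoly [Algebra.IsAlgebraic F E] [Finite F]
    {σ : E →+* E} {k : ℕ} (hσ : ∀ x, σ x = x ^ Nat.card F ^ k) (b : F) :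
    cubicPoints σ (algebraMap F E b) =
      {y | ((minpoly F y).natDegree ∣ 3 * k ∧ ¬ (minpoly F y).natDegree ∣ k) ∧
        (minpoly F (aeval y (X ^ 3 + C b * X))).natDegree ∣ k} := by
  have pow_three_mul : Nat.card F ^ (3 * k) = Nat.card F ^ k * Nat.card F ^ k * Nat.card F ^ k := by
    ring
  ext y
  simp only [cubicPoints, Set.mem_ofPred_eq, natDegree_minpoly_dvd_iff_pow_eq, hσ, ← pow_mul,
    pow_three_mul, map_add, map_mul, map_pow, aeval_X, aeval_C, ne_eq]

variable [IsAlgClosed E] [Fintype F]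

theorem sum_ncard_cubicPoints {σ : E →ₐ[F] E} {Q : ℕ} (hσ : ∀ x, σ x = x ^ Q) (hQ : (Q : E) = 0)
    {e : ℚ} (he : (Q % 3 = 1 ∧ e = 1) ∨ (Q % 3 = 2 ∧ e = -1)) :
    ∑ b : F, ((cubicPoints (σ : E →+* E) (algebraMap F E b)).ncard : ℚ) =
      (Fintype.card F + e) * (Q - e) := by
  classical
  have ncard_eq : ∀ b ∈ ({0}ᶜ : Finset F),
      ((cubicPoints (σ : E →+* E) (algebraMap F E b)).ncard : ℚ) = Q - e := fun b hb ↦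
    ncard_cubicPoints hσ hQ he (σ.commutes b)
      ((map_ne_zero (algebraMap F E)).mpr (by simpa using hb))
  rw [Fintype.sum_eq_add_sum_compl 0, Finset.sum_congr rfl ncard_eq, map_zero,
    ncard_cubicPoints_zero (σ := (σ : E →+* E)) hσ hQ he, Finset.sum_const, Finset.card_compl,
    Finset.card_singleton, nsmul_eq_mul, Nat.cast_pred Fintype.card_pos]
  ring

variable [Algebra.IsAlgebraic F E]

variable (F E) in
theorem sum_divisors_sum_ncard_inertPoints {ε : ℚ}
    (hε : (Fintype.card F % 3 = 1 ∧ ε = 1) ∨ (Fintype.card F % 3 = 2 ∧ ε = -1)) {k : ℕ}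
    (hk : 0 < k) :
    ∑ d ∈ k.divisors with ¬ 3 ∣ k / d,
        ∑ b : F, ((inertPoints F (fun y : E ↦ aeval y (X ^ 3 + C b * X)) 3 d).ncard : ℚ) =
      (Fintype.card F + ε ^ k) * (Fintype.card F ^ k - ε ^ k) := by
  let σ : E →ₐ[F] E := FiniteField.frobeniusAlgHom F E ^ k
  have hσ (x : E) : σ x = x ^ Fintype.card F ^ k := by
    simp only [σ, AlgHom.coe_pow, FiniteField.coe_frobeniusAlgHom, pow_iterate]
  have hQ : ((Fintype.card F ^ k : ℕ) : E) = 0 := by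
    rw [Nat.cast_pow, ← map_natCast (algebraMap F E), FiniteField.cast_card_eq_zero, map_zero,
      zero_pow hk.ne']
  have sieve (b : F) := ncard_eq_sum_ncard_inertPoints (E := E) (P := X ^ 3 + C b * X)
  have natDegree_eq (b : F) : (X ^ 3 + C b * X).natDegree = 3 := by compute_degree!
  simp only [natDegree_eq] at sieve
  rw [← Nat.cast_pow, ← sum_ncard_cubicPoints hσ hQ (sign_pow_of_mod_three hε k), Finset.sum_comm]
  refine Finset.sum_congr rfl fun b _ ↦ ?_
  rw [cubicPoints_eq_setOf_natDegree_minpoly (by simpa using hσ) b,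
    sieve b Nat.prime_three hk, Nat.cast_sum]

theorem sum_ncard_inertPoints {ε : ℚ}
    (hε : (Fintype.card F % 3 = 1 ∧ ε = 1) ∨ (Fintype.card F % 3 = 2 ∧ ε = -1)) {m : ℕ}
    (hm : 0 < m) :
    ∑ b : F, ((inertPoints F (fun y : E ↦ aeval y (X ^ 3 + C b * X)) 3 m).ncard : ℚ) =
      ∑ d ∈ m.divisors with ¬ 3 ∣ d, ((ArithmeticFunction.moebius d : ℤ) : ℚ) *
        ((Fintype.card F + ε ^ (m / d)) * (Fintype.card F ^ (m / d) - ε ^ (m / d))) :=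
  eq_sum_moebius_mul_of_sum_filter_eq Nat.prime_three
    (fun _ hk ↦ sum_divisors_sum_ncard_inertPoints F E hε hk) hm

theorem sum_ncard_irredSet (h3 : (3 : F) ≠ 0) (a : F) {m : ℕ} (hm : 0 < m) :
    3 * m * ∑ b : F, (IrredSet (X ^ 3) (C b * X ^ 2 + C a * X + 1) m).ncard =
      ∑ b : F, (inertPoints F (fun y : E ↦ aeval y (X ^ 3 + C b * X)) 3 m).ncard := by
  refine Eq.trans ?_ (Equiv.sum_comp (Equiv.subRight (a ^ 2 / 3)) _)
  rw [Finset.mul_sum]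
  refine Finset.sum_congr rfl fun b _ ↦ ?_
  have natDegree_lt : (C b * X ^ 2 + C a * X + 1).natDegree < (X ^ 3 : F[X]).natDegree := by
    rw [natDegree_X_pow]
    exact Nat.lt_succ_of_le (by compute_degree)
  have ne_zero : C b * X ^ 2 + C a * X + 1 ≠ 0 := fun h ↦ by
    simpa using congrArg (eval 0) h
  have ratio := ncard_inertPoints_ratio (E := E) (monic_X_pow 3) ne_zero natDegree_lt hm
  rw [natDegree_X_pow] at ratio
  rw [← ratio, ncard_inertPoints_cube_ratio, ncard_inertPoints_depressed_cubic h3]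
  rfl

end FiniteField

theorem stmt18_general {F : Type*} [Field F] [Fintype F] (a : F) {m : ℕ} (hm : 0 < m) {ε : ℚ}
    (hε : (Fintype.card F % 3 = 1 ∧ ε = 1) ∨ (Fintype.card F % 3 = 2 ∧ ε = -1)) :
    ∑ b : F, ((IrredSet (X ^ 3 : F[X]) (C b * X ^ 2 + C a * X + 1) m).ncard : ℚ) =
      1 / (3 * m) * ∑ d ∈ m.divisors with ¬ 3 ∣ d, ((ArithmeticFunction.moebius d : ℤ) : ℚ) *
        (Fintype.card F + ε ^ (m / d)) * (Fintype.card F ^ (m / d) - ε ^ (m / d)) := by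
  have h3 : (3 : F) ≠ 0 :=
    three_ne_zero_of_not_three_dvd (FiniteField.cast_card_eq_zero F) (by omega)
  have hm0 : (m : ℚ) ≠ 0 := Nat.cast_ne_zero.mpr hm.ne'
  simp only [mul_assoc]
  rw [← sum_ncard_inertPoints (E := AlgebraicClosure F) hε hm, ← Nat.cast_sum, ← Nat.cast_sum,
    ← sum_ncard_irredSet h3 a hm]
  push_cast
  field_simp

/-- Theorem 18: for `3 ∤ q` and `m > 1`, the sum of `|𝓘(x³, h, m, q)|` over all
`h(x) = 1 + ax + bx²` (i.e. all `h` of degree at most `2` with `h(0) = 1`) equals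
`(q/(3m)) ∑_{d ∣ m, 3 ∤ d} μ(d)(q + ε^{m/d})(q^{m/d} − ε^{m/d})`, where `ε = 1` if
`q ≡ 1 (mod 3)` and `ε = −1` if `q ≡ −1 (mod 3)`. -/
theorem stmt18 {F : Type*} [Field F] [Fintype F] (q : ℕ) (hq : Fintype.card F = q)
    (hq3 : ¬ 3 ∣ q) (m : ℕ) (hm : 1 < m) :
    ∀ ε : ℚ, ((q % 3 = 1 ∧ ε = 1) ∨ (q % 3 = 2 ∧ ε = -1)) →
      (∑ p : F × F,
          ((IrredSet (X ^ 3 : F[X]) (C p.2 * X ^ 2 + C p.1 * X + 1) m).ncard : ℚ)) =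
        ((q : ℚ) / (3 * m)) * ∑ d ∈ m.divisors.filter (fun d => ¬ 3 ∣ d),
          ((ArithmeticFunction.moebius d : ℤ) : ℚ) *
            ((q : ℚ) + ε ^ (m / d)) * ((q : ℚ) ^ (m / d) - ε ^ (m / d)) := by
  subst hq
  intro ε hε
  rw [Fintype.sum_prod_type, Finset.sum_congr rfl fun a _ ↦ stmt18_general a (by omega) hε,
    Finset.sum_const, Finset.card_univ, nsmul_eq_mul, ← mul_assoc, mul_one_div]
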